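/- Let β ≥ 1 be a countable ordinal and n, m positive integers. Suppose f : [0,1] → [0,1] is a unimodal, locally eventually onto map with critical point c such that ω(c) ≃ ω²·n + 1 and 𝓘 ≃ ω^{β+1}·m + 1. Then: (1) if β = 1, then (if n = 1 then m ≠ 2), (if n = 2 then 2 ≤ m and m ≠ 4), and (if 2 < n then n ≤ m); (2) if β > 1, then (if n = 1 then m ≠ 2), (if n = 2 then 2 ≤ m and m ≠ 4), and (if n = 4 then m ≠ 2). -/

import Mathlib

/-!
Write `W` for the omega-limit set of `c`, `D` for its second Cantor–Bendixson derivative (a set of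
`n` points) and `M` for the derivative of order `β + 1` of the set of inhomogeneities (a set of `m`
points). The set of inhomogeneities is the inverse limit of `f` restricted to `W`.

*Both finite sets give subsets of `[0,1]` permuted by `f`.* Since `W` is infinite with an isolated
point, `c ∉ W` (`critical_notMem`). Hence distinct points of `W` with the same image stay apart, `f`
restricted to `W` has discrete fibres and does not lower ranks, and `D` is permuted by `f`
(`bijOn_second`). The shift is a homeomorphism of the inverse limit, so it permutes the finite set
`M`; thus `M` consists of periodic backward orbits (`BackOrbit.periodic_of_finite`), and projecting
to the initial coordinate identifies `M` with a set `A ⊆ W` of `m` points permuted by `f`.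

*`A` meets `D`* (`BackOrbit.exists_over_second`). Periodic points of `W` are never isolated in `W`
(`not_isolated_of_periodic`). If some point of rank at least `β` is a nonperiodic backward orbit
through non-isolated points, its backward shifts accumulate at a point of `M` over `D`. If some point
of rank at least `β` passes through an isolated point of `W`, then backward orbits branching off from
it produce, in the limit, an orbit of the former kind (`exists_nonperiodic_of_isolated`). Otherwise
all points of rank at least `β` are periodic orbits through non-isolated points, the projection is
injective on them, and accumulation at a point of `M` projects to accumulation at a point of `D`.

*Arithmetic* (`card_constraints`). By the locally eventually onto property, points with the same
itinerary coincide, so `f` has at most one two-cycle; and it has at most one fixed point, since a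
fixed point to the left of `c` would force the critical orbit to be finite. So a two-point set
permuted by `f` is the unique two-cycle, it is contained in every permuted set that it meets, and a
four-point permuted set cannot contain it, as its complement there would be a second two-cycle.

*The bound `n ≤ m` for `β = 1`.* By compactness accumulation points lift through the projection of
the inverse limit onto `W`, so every point of `D` is the initial coordinate of a point of `M`
(`BackOrbit.second_subset_image`).
-/

open Set Filter

noncomputable section

/-- The unit interval `[0,1]` as a subtype of `ℝ`. -/
abbrev unitI : Type := Set.Icc (0 : ℝ) 1

/-- `f : [0,1] → [0,1]` is unimodal with critical point `c`: continuous, `c ∈ (0,1)`,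
strictly increasing on `[0,c]` and strictly decreasing on `[c,1]`. -/
def Unimodal (f : unitI → unitI) (c : unitI) : Prop :=
  Continuous f ∧ 0 < (c : ℝ) ∧ (c : ℝ) < 1 ∧
    StrictMonoOn f {x : unitI | x ≤ c} ∧ StrictAntiOn f {x : unitI | c ≤ x}

/-- `f` is locally eventually onto: for every `ε > 0` and every `x`, some iterate of `f`
maps the `ε`-ball about `x` (in `[0,1]`) onto all of `[0,1]`. -/
def LEO (f : unitI → unitI) : Prop :=
  ∀ ε : ℝ, 0 < ε → ∀ x : unitI, ∃ N : ℕ, f^[N] '' Metric.ball x ε = Set.univ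

/-- The omega-limit set of `c` under `f`: `⋂ₙ closure {fᵐ(c) : m ≥ n}`. -/
def omegaLimitSet (f : unitI → unitI) (c : unitI) : Set unitI :=
  ⋂ n : ℕ, closure {y : unitI | ∃ m : ℕ, n ≤ m ∧ f^[m] c = y}

/-- The inverse limit of `f`, as a subset of the product `ℕ → [0,1]`
(the subspace topology coincides with the topology induced by the usual metric). -/
def InvLim (f : unitI → unitI) : Set (ℕ → unitI) :=
  {x | ∀ i : ℕ, f (x (i + 1)) = x i}

/-- The set of inhomogeneities: points of the inverse limit all of whose
coordinates lie in the postcritical omega-limit set. -/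
def Inhom (f : unitI → unitI) (c : unitI) : Set (InvLim f) :=
  {x | ∀ n : ℕ, (x : ℕ → unitI) n ∈ omegaLimitSet f c}

/-- The ordinal space `{ξ : ξ ≤ o}` with its order topology. -/
def OrdSpace (o : Ordinal) : Type _ := Set.Iic o

instance (o : Ordinal) : LinearOrder (OrdSpace o) :=
  inferInstanceAs (LinearOrder (Set.Iic o))

instance (o : Ordinal) : TopologicalSpace (OrdSpace o) := Preorder.topology (OrdSpace o)

instance (o : Ordinal) : OrderTopology (OrdSpace o) := ⟨rfl⟩

/-- `X ≃ ω^γ·k + 1` in the sense of the paper: `X` is homeomorphic to the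
ordinal space `{ξ : ξ ≤ o}` with its order topology. -/
def HomeoOrd (X : Type*) [TopologicalSpace X] (o : Ordinal) : Prop :=
  Nonempty (X ≃ₜ OrdSpace o)

open scoped Topology

/-! ### Cantor–Bendixson derivatives -/

/-- The transfinite Cantor–Bendixson derivative `X^(α)`, defined uniformly as the set of points
that are accumulation points of `X^(β)` for every `β < α`. -/
def cbDeriv (X : Type*) [TopologicalSpace X] (α : Ordinal) : Set X :=
  {x | ∀ β, β < α → x ∈ derivedSet (cbDeriv X β)}
termination_by α

section CantorBendixson

variable {X Y : Type*} [TopologicalSpace X] [TopologicalSpace Y]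

theorem mem_cbDeriv {α : Ordinal} {x : X} :
    x ∈ cbDeriv X α ↔ ∀ β, β < α → x ∈ derivedSet (cbDeriv X β) := by
  rw [cbDeriv]; rfl

theorem cbDeriv_anti {α β : Ordinal} (h : α ≤ β) : cbDeriv X β ⊆ cbDeriv X α := by
  intro x hx
  rw [mem_cbDeriv] at hx ⊢
  exact fun γ hγ => hx γ (hγ.trans_le h)

theorem cbDeriv_zero : cbDeriv X 0 = univ := by
  ext x
  simp [mem_cbDeriv]

theorem cbDeriv_add_one (α : Ordinal) : cbDeriv X (α + 1) = derivedSet (cbDeriv X α) := by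
  ext x
  rw [mem_cbDeriv]
  refine ⟨fun h => h α (by simp), fun h β hβ => ?_⟩
  exact derivedSet_mono _ _ (cbDeriv_anti (Order.lt_add_one_iff.1 hβ)) h

theorem cbDeriv_two : cbDeriv X 2 = derivedSet (derivedSet univ) := by
  rw [← one_add_one_eq_two, cbDeriv_add_one, ← zero_add 1, cbDeriv_add_one, cbDeriv_zero]

theorem isClosed_cbDeriv [T1Space X] (α : Ordinal) : IsClosed (cbDeriv X α) := by
  have : cbDeriv X α = ⋂ β : Set.Iio α, derivedSet (cbDeriv X β.1) := by
    ext x; rw [mem_cbDeriv]; simp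
  rw [this]
  exact isClosed_iInter fun β => isClosed_derivedSet _

/-- A continuous map with discrete fibres carries accumulation points of `A` to accumulation points
of any set containing the image of `A`; hence it does not lower Cantor–Bendixson ranks. -/
theorem mapsTo_derivedSet {φ : X → Y} (hφ : Continuous φ)
    (hinj : ∀ x, ∀ᶠ y in 𝓝 x, φ y = φ x → y = x) {A : Set X} {B : Set Y}
    (hAB : MapsTo φ A B) : MapsTo φ (derivedSet A) (derivedSet B) := by
  intro x hx
  rw [mem_derivedSet, accPt_iff_frequently] at hx ⊢
  refine hφ.continuousAt.frequently ?_
  refine (hx.and_eventually (hinj x)).mono ?_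
  rintro y ⟨⟨hne, hy⟩, h⟩
  exact ⟨fun h' => hne (h h'), hAB hy⟩

theorem mapsTo_cbDeriv {φ : X → Y} (hφ : Continuous φ)
    (hinj : ∀ x, ∀ᶠ y in 𝓝 x, φ y = φ x → y = x) (α : Ordinal) :
    MapsTo φ (cbDeriv X α) (cbDeriv Y α) := by
  induction α using WellFoundedLT.induction with
  | ind α ih =>
    intro x hx
    rw [mem_cbDeriv] at hx ⊢
    exact fun β hβ => mapsTo_derivedSet hφ hinj (ih β hβ) (hx β hβ)

theorem homeo_mem_cbDeriv (e : X ≃ₜ Y) (α : Ordinal) (x : X) :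
    e x ∈ cbDeriv Y α ↔ x ∈ cbDeriv X α := by
  refine ⟨fun h => ?_, fun h => mapsTo_cbDeriv e.continuous
    (fun x => Eventually.of_forall fun y hy => e.injective hy) α h⟩
  have := mapsTo_cbDeriv e.symm.continuous
    (fun x => Eventually.of_forall fun y hy => e.symm.injective hy) α h
  simpa using this

theorem homeo_ncard_cbDeriv (e : X ≃ₜ Y) (α : Ordinal) :
    (cbDeriv X α).ncard = (cbDeriv Y α).ncard := by
  have : e '' cbDeriv X α = cbDeriv Y α := by
    ext y
    constructor
    · rintro ⟨x, hx, rfl⟩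
      exact (homeo_mem_cbDeriv e α x).2 hx
    · intro hy
      refine ⟨e.symm y, ?_, by simp⟩
      rw [← homeo_mem_cbDeriv e]
      simpa using hy
  rw [← this, Set.ncard_image_of_injective _ e.injective]

/-- Accumulation points lift along continuous maps from a compact space. -/
theorem exists_lift_derivedSet [CompactSpace X] [T2Space Y] {φ : X → Y} (hφ : Continuous φ)
    {A : Set X} {B : Set Y} (hBA : B ⊆ φ '' A) {y : Y} (hy : y ∈ derivedSet B) :
    ∃ x ∈ derivedSet A, φ x = y := by
  have hy' : (𝓝[≠] y ⊓ 𝓟 B).NeBot := hy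
  have hF : (comap φ (𝓝[≠] y ⊓ 𝓟 B) ⊓ 𝓟 A).NeBot := by
    rw [Filter.inf_principal_neBot_iff]
    intro U hU
    obtain ⟨V, hV, hVU⟩ := mem_comap.1 hU
    obtain ⟨z, hzV, hzB⟩ := hy'.nonempty_of_mem
      (inter_mem hV (mem_inf_of_right (mem_principal_self B)))
    obtain ⟨x, hxA, rfl⟩ := hBA hzB
    exact ⟨x, hVU hzV, hxA⟩
  obtain ⟨x, hx⟩ := exists_clusterPt_of_compactSpace (comap φ (𝓝[≠] y ⊓ 𝓟 B) ⊓ 𝓟 A)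
  have hxy : φ x = y := by
    have h1 : ClusterPt (φ x) (map φ (comap φ (𝓝[≠] y ⊓ 𝓟 B) ⊓ 𝓟 A)) :=
      hx.map hφ.continuousAt tendsto_map
    have h2 : ClusterPt (φ x) (𝓝 y) := h1.mono <|
      (map_mono inf_le_left).trans <| map_comap_le.trans <|
        inf_le_left.trans nhdsWithin_le_nhds
    by_contra hne
    exact h2.neBot.ne (disjoint_iff.1 (disjoint_nhds_nhds.2 hne))
  refine ⟨x, ?_, hxy⟩
  rw [mem_derivedSet, accPt_iff_clusterPt]
  refine hx.mono (le_inf ?_ inf_le_right)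
  refine inf_le_left.trans ?_
  rw [le_principal_iff, mem_comap]
  refine ⟨{y}ᶜ, mem_inf_of_left self_mem_nhdsWithin, ?_⟩
  rintro z hz rfl
  exact hz hxy

/-- A cluster point of an injective sequence is an accumulation point of its range. -/
theorem mem_derivedSet_of_mapClusterPt {u : ℕ → X} (hu : Function.Injective u) {A : Set X}
    (hA : ∀ k, u k ∈ A) {y : X} (hy : MapClusterPt y atTop u) : y ∈ derivedSet A := by
  rw [mem_derivedSet, accPt_iff_nhds]
  intro V hV
  have hfr := (mapClusterPt_iff_frequently.1 hy) V hV
  obtain ⟨k, -, hk⟩ := frequently_atTop.1 hfr 0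
  obtain ⟨l, hl, hl'⟩ := frequently_atTop.1 hfr (k + 1)
  by_cases h : u k = y
  · exact ⟨u l, ⟨hl', hA l⟩, fun h' => by have := hu (h.trans h'.symm); omega⟩
  · exact ⟨u k, ⟨hk, hA k⟩, h⟩

end CantorBendixson

/-! ### Inverse limits of maps with discrete fibres -/

/-- The inverse limit of a self-map `g`. -/
abbrev BackOrbit {W : Type*} (g : W → W) : Type _ := {x : ℕ → W // ∀ i, g (x (i + 1)) = x i}

namespace BackOrbit

variable {W : Type*} {g : W → W}

/-- Forgetting the first `k` coordinates; this is the `k`-th iterate of the inverse of the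
homeomorphism that `g` induces on its inverse limit. -/
def drop (k : ℕ) (x : BackOrbit g) : BackOrbit g := ⟨fun i => x.1 (i + k), fun i => by
  have := x.2 (i + k)
  rwa [show i + k + 1 = i + 1 + k by omega] at this⟩

@[simp] theorem drop_apply (k : ℕ) (x : BackOrbit g) (i : ℕ) : (x.drop k).1 i = x.1 (i + k) := rfl

theorem iterate_apply (x : BackOrbit g) (k i : ℕ) : g^[k] (x.1 (i + k)) = x.1 i := by
  induction k with
  | zero => rfl
  | succ k ih => rw [Function.iterate_succ_apply, ← add_assoc, x.2, ih]

/-- A backward orbit starting at a point that is not `g`-periodic has pairwise distinct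
coordinates. -/
theorem injective_of_not_periodic {x : BackOrbit g} (h : x.1 0 ∉ Function.periodicPts g) :
    Function.Injective x.1 := by
  have key : ∀ k d, x.1 k ≠ x.1 (k + (d + 1)) := by
    intro k d hkd
    have hper : x.1 k ∈ Function.periodicPts g := by
      refine Function.mk_mem_periodicPts (n := d + 1) (by omega) ?_
      have := x.iterate_apply (d + 1) k
      rwa [← hkd] at this
    apply h
    have h0 := x.iterate_apply k 0
    rw [zero_add] at h0
    rw [← h0]
    have hb := (Function.bijOn_periodicPts g).mapsTo
    exact hb.iterate k hper
  intro k l hkl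
  rcases lt_trichotomy k l with h' | h' | h'
  · obtain ⟨d, rfl⟩ := Nat.exists_eq_add_of_lt h'
    exact absurd hkl (key k d)
  · exact h'
  · obtain ⟨d, rfl⟩ := Nat.exists_eq_add_of_lt h'
    exact absurd hkl.symm (key l d)

theorem eq_of_periodic {x y : BackOrbit g} (hx : ∀ k, x.1 k ∈ Function.periodicPts g)
    (hy : ∀ k, y.1 k ∈ Function.periodicPts g) (h : x.1 0 = y.1 0) : x = y := by
  apply Subtype.ext
  funext k
  induction k with
  | zero => exact h
  | succ k ih =>
    refine (Function.bijOn_periodicPts g).injOn (hx _) (hy _) ?_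
    rw [x.2, y.2, ih]

variable [TopologicalSpace W]

theorem continuous_coord (i : ℕ) : Continuous fun x : BackOrbit g => x.1 i :=
  (continuous_apply i).comp continuous_subtype_val

/-- The shift on the inverse limit, as a homeomorphism. -/
def shift (hg : Continuous g) : BackOrbit g ≃ₜ BackOrbit g where
  toFun := drop 1
  invFun x := ⟨fun i => g (x.1 i), fun i => congrArg g (x.2 i)⟩
  left_inv x := Subtype.ext (funext fun i => x.2 i)
  right_inv x := Subtype.ext (funext fun i => x.2 i)
  continuous_toFun := Continuous.subtype_mk
    (continuous_pi fun i => continuous_coord (i + 1)) _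
  continuous_invFun := Continuous.subtype_mk
    (continuous_pi fun i => hg.comp (continuous_coord i)) _

theorem drop_mem_cbDeriv (hg : Continuous g) {α : Ordinal} {x : BackOrbit g}
    (hx : x ∈ cbDeriv (BackOrbit g) α) (k : ℕ) : x.drop k ∈ cbDeriv (BackOrbit g) α := by
  induction k with
  | zero => exact hx
  | succ k ih =>
    have := (homeo_mem_cbDeriv (shift hg) α _).2 ih
    convert this using 1
    apply Subtype.ext
    funext i
    show x.1 (i + (k + 1)) = x.1 (i + 1 + k)
    rw [show i + (k + 1) = i + 1 + k by omega]

theorem compactSpace [CompactSpace W] [T2Space W] (hg : Continuous g) :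
    CompactSpace (BackOrbit g) := by
  have hcl : IsClosed {x : ℕ → W | ∀ i, g (x (i + 1)) = x i} := by
    rw [Set.ofPred_forall]
    exact isClosed_iInter fun i =>
      isClosed_eq (hg.comp (continuous_apply (i + 1))) (continuous_apply i)
  exact isCompact_iff_compactSpace.1 hcl.isCompact

/-- If the set of pairs of distinct points identified by `g` is closed, it stays away from the
diagonal, so the fibres of `g` are discrete. -/
theorem eventually_fiber (hH : IsClosed {p : W × W | p.1 ≠ p.2 ∧ g p.1 = g p.2}) (x : W) :
    ∀ᶠ y in 𝓝 x, g y = g x → y = x := by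
  have h1 : ∀ᶠ p in 𝓝 (x, x), p ∈ {p : W × W | p.1 ≠ p.2 ∧ g p.1 = g p.2}ᶜ :=
    hH.isOpen_compl.mem_nhds (by simp)
  have h2 : Tendsto (fun y : W => (y, x)) (𝓝 x) (𝓝 (x, x)) :=
    (Continuous.prodMk_left x).tendsto x
  filter_upwards [h2.eventually h1] with y hy hgy
  by_contra hne
  exact hy ⟨hne, hgy⟩

/-- A backward orbit of rank at least `α` with a nonperiodic coordinate that runs through
non-isolated points of `W` accumulates backwards at a point of rank at least `α + 1` lying over the
second derivative of `W`. -/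
theorem exists_over_second_of_nonperiodic [CompactSpace W] [T2Space W] (hg : Continuous g)
    {α : Ordinal} {x : BackOrbit g} (hx : x ∈ cbDeriv (BackOrbit g) α)
    (hxW : ∀ k, x.1 k ∈ derivedSet (univ : Set W)) (hnp : ∃ k, x.1 k ∉ Function.periodicPts g) :
    ∃ y ∈ cbDeriv (BackOrbit g) (α + 1), y.1 0 ∈ derivedSet (derivedSet (univ : Set W)) := by
  have := compactSpace hg
  obtain ⟨K, hK⟩ := hnp
  have hinj : Function.Injective (x.drop K).1 :=
    injective_of_not_periodic (by simpa using hK)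
  obtain ⟨y, hy⟩ := exists_clusterPt_of_compactSpace
    (map (fun k => (x.drop K).drop k) atTop)
  have hy : MapClusterPt y atTop (fun k => (x.drop K).drop k) := hy
  refine ⟨y, ?_, ?_⟩
  · rw [cbDeriv_add_one]
    refine mem_derivedSet_of_mapClusterPt ?_
      (fun k => drop_mem_cbDeriv hg (drop_mem_cbDeriv hg hx K) k) hy
    intro k l hkl
    have := congrArg (fun z : BackOrbit g => z.1 0) hkl
    simp only [drop_apply, zero_add] at this
    exact hinj this
  · have h0 := hy.continuousAt_comp (f := fun z : BackOrbit g => z.1 0)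
      (continuous_coord 0).continuousAt
    refine mem_derivedSet_of_mapClusterPt ?_ (fun k => ?_) h0
    · intro k l hkl
      simp only [Function.comp, drop_apply, zero_add] at hkl
      exact hinj (by simpa using hkl)
    · simpa using hxW _

/-- A backward orbit of rank at least `α ≥ 1` with a coordinate isolated in `W` can be replaced
by a nonperiodic one, of rank at least `α`, running through non-isolated points. Nearby backward
orbits coincide with `x` up to a late index `K`, and then branch off to a second preimage of `x K`;
limits `s` of these branches, and limits `a` of the corresponding shifts of `x`, have distinct
initial points with the same image, so they cannot both be periodic. -/
theorem exists_nonperiodic_of_isolated [CompactSpace W] [T2Space W] (hg : Continuous g)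
    (hH : IsClosed {p : W × W | p.1 ≠ p.2 ∧ g p.1 = g p.2})
    (hper : ∀ w ∈ Function.periodicPts g, w ∈ derivedSet (univ : Set W))
    {α : Ordinal} (hα : 1 ≤ α) {x : BackOrbit g} (hx : x ∈ cbDeriv (BackOrbit g) α)
    (hxW : ∃ k, x.1 k ∉ derivedSet (univ : Set W)) :
    ∃ s ∈ cbDeriv (BackOrbit g) α, (∀ k, s.1 k ∈ derivedSet (univ : Set W)) ∧
      ∃ k, s.1 k ∉ Function.periodicPts g := by
  have := compactSpace hg
  have hα0 : (0 : Ordinal) < α := lt_of_lt_of_le zero_lt_one hα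
  -- Discarding finitely many coordinates makes all coordinates of `x` isolated in `W`.
  wlog hx0 : ∀ k, x.1 k ∉ derivedSet (univ : Set W) generalizing x
  · obtain ⟨K, hK⟩ := hxW
    have hall : ∀ k, (x.drop K).1 k ∉ derivedSet (univ : Set W) := by
      intro k hk
      apply hK
      have h1 : MapsTo g (derivedSet univ) (derivedSet univ) :=
        mapsTo_derivedSet hg (eventually_fiber hH) (mapsTo_univ g univ)
      have h2 := h1.iterate k hk
      rw [drop_apply, add_comm, x.iterate_apply] at h2
      exact h2
    exact this (drop_mem_cbDeriv hg hx K) ⟨0, hall 0⟩ hall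
  have hinj : Function.Injective x.1 :=
    injective_of_not_periodic fun h => hx0 0 (hper _ h)
  have hescape : ∀ w : W, ∃ N, ∀ K ≥ N, x.1 K ≠ w := by
    intro w
    by_cases h : ∃ N, x.1 N = w
    · obtain ⟨N, rfl⟩ := h
      exact ⟨N + 1, fun K hK h' => by have := hinj h'; omega⟩
    · push Not at h
      exact ⟨0, fun K _ => h K⟩
  let Z : ℕ × Set.Iio α → Set (BackOrbit g × BackOrbit g) := fun i =>
    {p | p.1 ∈ cbDeriv (BackOrbit g) i.2.1 ∧ ∃ K ≥ i.1, p.2 = x.drop (K + 1) ∧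
      g (p.1.1 0) = x.1 K ∧ p.1.1 0 ≠ x.1 (K + 1)}
  have hZne : ∀ i, (Z i).Nonempty := by
    rintro ⟨N, β, hβ⟩
    have hacc := mem_cbDeriv.1 hx β hβ
    rw [mem_derivedSet, accPt_iff_nhds] at hacc
    have hiso : ({x.1 N} : Set W) ∈ 𝓝 (x.1 N) := by
      have := hx0 N
      rw [mem_derivedSet, accPt_iff_nhds] at this
      push Not at this
      obtain ⟨U, hU, h⟩ := this
      filter_upwards [hU] with z hz using h z ⟨hz, mem_univ z⟩
    obtain ⟨y, ⟨hyN, hyβ⟩, hyx⟩ := hacc ((fun z : BackOrbit g => z.1 N) ⁻¹' {x.1 N})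
      ((continuous_coord N).continuousAt hiso)
    have hex : ∃ j, y.1 j ≠ x.1 j := by
      by_contra! h
      exact hyx (Subtype.ext (funext h))
    classical
    have hfind := Nat.find_spec hex
    have hmin : ∀ j < Nat.find hex, y.1 j = x.1 j := fun j hj => not_not.1 (Nat.find_min hex hj)
    have hjN : N < Nat.find hex := by
      by_contra! hle
      obtain ⟨d, hd⟩ := Nat.exists_eq_add_of_le hle
      apply hfind
      have e1 := y.iterate_apply d (Nat.find hex)
      have e2 := x.iterate_apply d (Nat.find hex)
      rw [← hd] at e1 e2
      rw [← e1, ← e2]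
      exact congrArg _ hyN
    obtain ⟨K, hK⟩ : ∃ K, Nat.find hex = K + 1 := ⟨Nat.find hex - 1, by omega⟩
    rw [hK] at hfind hmin hjN
    refine ⟨(y.drop (K + 1), x.drop (K + 1)), drop_mem_cbDeriv hg hyβ _, K, by
      show N ≤ K
      omega, rfl, ?_, ?_⟩
    · simp only [drop_apply, zero_add]
      rw [y.2, hmin K (by omega)]
    · simpa using hfind
  have hZmono : ∀ i j : ℕ × Set.Iio α, i ≤ j → Z j ⊆ Z i := by
    rintro i j ⟨h1, h2⟩ p ⟨hp, K, hK, h⟩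
    exact ⟨cbDeriv_anti h2 hp, K, le_trans h1 hK, h⟩
  have : Nonempty (ℕ × Set.Iio α) := ⟨(0, ⟨0, hα0⟩)⟩
  obtain ⟨⟨s, a⟩, hsa⟩ := IsCompact.nonempty_iInter_of_directed_nonempty_isCompact_isClosed
    (fun i => closure (Z i))
    (fun i j => ⟨i ⊔ j, closure_mono (hZmono _ _ le_sup_left),
      closure_mono (hZmono _ _ le_sup_right)⟩)
    (fun i => (hZne i).closure) (fun i => isClosed_closure.isCompact) (fun i => isClosed_closure)
  rw [mem_iInter] at hsa
  have hclose : ∀ i : ℕ × Set.Iio α, ∀ V ∈ 𝓝 s, ∀ U ∈ 𝓝 a, ∃ z K, z ∈ V ∧ x.drop (K + 1) ∈ U ∧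
      z ∈ cbDeriv (BackOrbit g) i.2.1 ∧ i.1 ≤ K ∧ g (z.1 0) = x.1 K := by
    intro i V hV U hU
    obtain ⟨⟨z, b⟩, ⟨hzV, hbU⟩, hz, K, hK, hb, hgz, -⟩ :=
      mem_closure_iff_nhds.1 (hsa i) _ (prod_mem_nhds hV hU)
    simp only at hb
    subst hb
    exact ⟨z, K, hzV, hbU, hz, hK, hgz⟩
  have hpair : s.1 0 ≠ a.1 0 ∧ g (s.1 0) = g (a.1 0) := by
    have hcl : IsClosed ((fun p : BackOrbit g × BackOrbit g => (p.1.1 0, p.2.1 0)) ⁻¹'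
        {p : W × W | p.1 ≠ p.2 ∧ g p.1 = g p.2}) :=
      hH.preimage (((continuous_coord 0).comp continuous_fst).prodMk
        ((continuous_coord 0).comp continuous_snd))
    refine closure_minimal ?_ hcl (hsa (0, ⟨0, hα0⟩))
    rintro ⟨z, b⟩ ⟨-, K, -, rfl, h1, h2⟩
    refine ⟨by simpa using h2, ?_⟩
    simp only [drop_apply, zero_add] at h1 ⊢
    rw [h1, x.2]
  have haα : a ∈ cbDeriv (BackOrbit g) α := by
    refine (isClosed_cbDeriv α).closure_subset (mem_closure_iff_nhds.2 fun U hU => ?_)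
    obtain ⟨z, K, -, hU', -⟩ := hclose (0, ⟨0, hα0⟩) univ univ_mem U hU
    exact ⟨_, hU', drop_mem_cbDeriv hg hx _⟩
  have hsα : s ∈ cbDeriv (BackOrbit g) α := by
    rw [mem_cbDeriv]
    intro β hβ
    rw [mem_derivedSet, accPt_iff_nhds]
    intro V hV
    obtain ⟨N, hN⟩ := hescape (g (s.1 0))
    obtain ⟨z, K, hzV, -, hzβ, hK, hgz⟩ := hclose (N, ⟨β, hβ⟩) V hV univ univ_mem
    refine ⟨z, ⟨hzV, hzβ⟩, ?_⟩
    rintro rfl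
    exact hN K hK hgz.symm
  have hsW : ∀ k, s.1 k ∈ derivedSet (univ : Set W) := by
    intro k
    rw [mem_derivedSet, accPt_iff_nhds]
    intro V hV
    obtain ⟨N, hN⟩ := hescape (g (s.1 0))
    obtain ⟨z, K, hzV, -, -, hK, hgz⟩ := hclose (N, ⟨0, hα0⟩) _
      ((continuous_coord k).continuousAt hV) univ univ_mem
    refine ⟨z.1 k, ⟨hzV, mem_univ _⟩, fun h => hN K hK ?_⟩
    have e1 := z.iterate_apply k 0
    have e2 := s.iterate_apply k 0
    rw [zero_add] at e1 e2
    rw [← hgz, ← e1, ← e2, h]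
  have haW : ∀ k, a.1 k ∈ derivedSet (univ : Set W) := by
    intro k
    rw [mem_derivedSet, accPt_iff_nhds]
    intro V hV
    obtain ⟨N, hN⟩ := hescape (a.1 k)
    obtain ⟨z, K, -, hU, -, hK, -⟩ := hclose (N, ⟨0, hα0⟩) univ univ_mem _
      ((continuous_coord k).continuousAt hV)
    exact ⟨x.1 (k + (K + 1)), ⟨hU, mem_univ _⟩, hN _ (by have : N ≤ K := hK; omega)⟩
  by_cases ha : a.1 0 ∈ Function.periodicPts g
  · refine ⟨s, hsα, hsW, 0, fun hs => hpair.1 ?_⟩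
    exact (Function.bijOn_periodicPts g).injOn hs ha hpair.2
  · exact ⟨a, haα, haW, 0, ha⟩

/-- A nonempty derivative of the inverse limit of order at least two and of successor order meets
the union of the fibres over the second derivative of `W`. If all points of rank at least `α` are
periodic and run through non-isolated points, then projecting to the initial coordinate is
injective on them and preserves accumulation. -/
theorem exists_over_second [CompactSpace W] [T2Space W] (hg : Continuous g)
    (hH : IsClosed {p : W × W | p.1 ≠ p.2 ∧ g p.1 = g p.2})
    (hper : ∀ w ∈ Function.periodicPts g, w ∈ derivedSet (univ : Set W))
    {α : Ordinal} (hα : 1 ≤ α) (hne : (cbDeriv (BackOrbit g) (α + 1)).Nonempty) :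
    ∃ y ∈ cbDeriv (BackOrbit g) (α + 1), y.1 0 ∈ derivedSet (derivedSet (univ : Set W)) := by
  by_cases hT : ∃ x ∈ cbDeriv (BackOrbit g) α, ∃ k, x.1 k ∉ derivedSet (univ : Set W)
  · obtain ⟨x, hx, hxW⟩ := hT
    obtain ⟨s, hs, hsW, hnp⟩ := exists_nonperiodic_of_isolated hg hH hper hα hx hxW
    exact exists_over_second_of_nonperiodic hg hs hsW hnp
  push Not at hT
  by_cases hNP : ∃ x ∈ cbDeriv (BackOrbit g) α, ∃ k, x.1 k ∉ Function.periodicPts g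
  · obtain ⟨x, hx, hnp⟩ := hNP
    exact exists_over_second_of_nonperiodic hg hx (hT x hx) hnp
  push Not at hNP
  obtain ⟨y, hy⟩ := hne
  refine ⟨y, hy, ?_⟩
  have hyα : y ∈ cbDeriv (BackOrbit g) α := cbDeriv_anti (by simp) hy
  rw [cbDeriv_add_one, mem_derivedSet, accPt_iff_nhds] at hy
  rw [mem_derivedSet, accPt_iff_nhds]
  intro V hV
  obtain ⟨x, ⟨hxV, hx⟩, hxy⟩ := hy _ ((continuous_coord 0).continuousAt hV)
  exact ⟨x.1 0, ⟨hxV, hT x hx 0⟩, fun h => hxy (eq_of_periodic (hNP x hx) (hNP y hyα) h)⟩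

end BackOrbit

/-! ### Cantor–Bendixson derivatives of ordinal spaces -/

section Ordinals

open Ordinal

theorem isOpen_Iic_of_wellFounded {L : Type*} [LinearOrder L] [WellFoundedLT L]
    [TopologicalSpace L] [OrderTopology L] (a : L) : IsOpen (Iic a) := by
  by_cases h : ∃ b, a < b
  · have hne : {b | a < b}.Nonempty := h
    set m := WellFounded.min (wellFounded_lt (α := L)) {b | a < b} hne with hm
    have h1 : a < m := WellFounded.min_mem (wellFounded_lt (α := L)) {b | a < b} hne
    have : Iic a = Iio m := by
      ext y
      refine ⟨fun hy => lt_of_le_of_lt hy h1, fun hy => ?_⟩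
      by_contra hlt
      exact WellFounded.not_lt_min (wellFounded_lt (α := L)) {b | a < b} (not_le.1 hlt) hy
    rw [this]
    exact isOpen_Iio
  · push Not at h
    rw [show Iic a = Set.univ from eq_univ_of_forall h]
    exact isOpen_univ

theorem mem_derivedSet_iff_of_wellFounded {L : Type*} [LinearOrder L] [WellFoundedLT L]
    [TopologicalSpace L] [OrderTopology L] (S : Set L) (a : L) :
    a ∈ derivedSet S ↔ (∃ b, b < a) ∧ ∀ b < a, ∃ z ∈ S, b < z ∧ z < a := by
  rw [mem_derivedSet, accPt_iff_nhds]
  constructor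
  · intro h
    have hIic : Iic a ∈ 𝓝 a := (isOpen_Iic_of_wellFounded a).mem_nhds (mem_Iic.2 le_rfl)
    constructor
    · obtain ⟨y, ⟨hy, -⟩, hne⟩ := h _ hIic
      exact ⟨y, lt_of_le_of_ne hy hne⟩
    · intro b hb
      obtain ⟨y, ⟨⟨hy, hby⟩, hyS⟩, hne⟩ := h _ (inter_mem hIic (Ioi_mem_nhds hb))
      exact ⟨y, hyS, hby, lt_of_le_of_ne hy hne⟩
  · rintro ⟨hex, h⟩ U hU
    obtain ⟨l, hl, hlU⟩ := exists_Ioc_subset_of_mem_nhds hU hex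
    obtain ⟨z, hz, hlz, hza⟩ := h l hl
    exact ⟨z, ⟨hlU ⟨hlz, hza.le⟩, hz⟩, hza.ne⟩

theorem exists_dvd_between {α β ξ η : Ordinal} (hβ : β < α) (hdvd : ω ^ α ∣ ξ)
    (hη : η < ξ) : ∃ ζ, η < ζ ∧ ζ < ξ ∧ ζ ≠ 0 ∧ ω ^ β ∣ ζ := by
  have hpos : ω ^ β ≠ 0 := (opow_pos β omega0_pos).ne'
  refine ⟨ω ^ β * Order.succ (η / ω ^ β), lt_mul_succ_div η hpos, ?_, ?_, dvd_mul_right _ _⟩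
  · have h1 : ω ^ (β + 1) ∣ ξ := (opow_dvd_opow ω (Order.add_one_le_of_lt hβ)).trans hdvd
    obtain ⟨k, rfl⟩ := h1
    rw [opow_add, opow_one, mul_assoc] at hη ⊢
    have h2 : Order.IsSuccPrelimit (ω * k) := isSuccPrelimit_iff_omega0_dvd.2 (dvd_mul_right _ _)
    have h3 : η / ω ^ β < ω * k := (lt_mul_iff_div_lt hpos).1 hη
    exact mul_lt_mul_of_pos_left (h2.succ_lt h3) (opow_pos β omega0_pos)
  · exact (lt_of_le_of_lt zero_le (lt_mul_succ_div η hpos)).ne'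

theorem opow_dvd_of_dense {α ξ : Ordinal} (h : ∀ β < α, ∀ η < ξ, ∃ ζ, η < ζ ∧ ζ < ξ ∧ ω ^ β ∣ ζ) :
    ω ^ α ∣ ξ := by
  have step : ∀ β < α, ω ^ (β + 1) ∣ ξ := by
    intro β hβ
    have hp : 0 < ω ^ β := opow_pos β omega0_pos
    have hpos : ω ^ β ≠ 0 := hp.ne'
    have hdiv : ω ^ β * (ξ / ω ^ β) = ξ := by
      by_contra hne
      obtain ⟨ζ, h1, h2, ε, rfl⟩ := h β hβ _ (lt_of_le_of_ne (mul_div_le ξ _) hne)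
      have h3 : ξ / ω ^ β < ε := lt_of_mul_lt_mul_left h1 zero_le
      have h4 : ε ≤ ξ / ω ^ β := (mul_le_iff_le_div hpos).1 h2.le
      exact absurd h3 (not_lt.2 h4)
    have hlim : ω ∣ ξ / ω ^ β := by
      rw [← isSuccPrelimit_iff_omega0_dvd, Order.isSuccPrelimit_iff_succ_ne]
      intro ε hε
      have hlt : ω ^ β * ε < ξ := by
        rw [← hdiv, ← hε]
        exact mul_lt_mul_of_pos_left (Order.lt_succ ε) hp
      obtain ⟨ζ, h1, h2, δ, rfl⟩ := h β hβ _ hlt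
      have h3 : ε < δ := lt_of_mul_lt_mul_left h1 zero_le
      rw [← hdiv, ← hε] at h2
      have h4 : δ < Order.succ ε := lt_of_mul_lt_mul_left h2 zero_le
      exact absurd h3 (not_lt.2 (Order.lt_succ_iff.1 h4))
    obtain ⟨k, hk⟩ := hlim
    refine ⟨k, ?_⟩
    rw [opow_add, opow_one, mul_assoc, ← hk, hdiv]
  rcases zero_or_succ_or_isSuccLimit α with rfl | ⟨β, rfl⟩ | hlim
  · simp
  · exact step β (by simp)
  · apply dvd_of_mod_eq_zero
    have hlt : ξ % ω ^ α < ω ^ α := mod_lt ξ (opow_pos α omega0_pos).ne'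
    obtain ⟨β, hβ, hr⟩ := (lt_opow_of_isSuccLimit omega0_ne_zero hlim).1 hlt
    have h1 : ω ^ β ∣ ξ := (opow_dvd_opow ω (by simp)).trans (step β hβ)
    have h2 := mod_mod_of_dvd ξ (opow_dvd_opow ω hβ.le)
    rw [mod_eq_of_lt hr, mod_eq_zero_of_dvd h1] at h2
    exact h2

/-- The ordinal underlying a point of an ordinal space. -/
def ordVal {o : Ordinal} (ξ : OrdSpace o) : Ordinal := Subtype.val (p := (· ∈ Set.Iic o)) ξ

theorem ordVal_le {o : Ordinal} (ξ : OrdSpace o) : ordVal ξ ≤ o := Subtype.property ξ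

theorem ordVal_injective {o : Ordinal} : Function.Injective (ordVal (o := o)) :=
  Subtype.val_injective

theorem ordVal_lt {o : Ordinal} {ξ η : OrdSpace o} : ordVal ξ < ordVal η ↔ ξ < η := Iff.rfl

instance (o : Ordinal) : WellFoundedLT (OrdSpace o) :=
  inferInstanceAs (WellFoundedLT (Set.Iic o))

theorem exists_ordVal {o ξ : Ordinal} (h : ξ ≤ o) : ∃ x : OrdSpace o, ordVal x = ξ :=
  ⟨(⟨ξ, h⟩ : Set.Iic o), rfl⟩

/-- A point of an ordinal space has rank at least `α ≥ 1` iff it is a nonzero multiple of `ω ^ α`. -/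
theorem mem_cbDeriv_ordSpace {o : Ordinal} (α : Ordinal) (ξ : OrdSpace o) :
    ξ ∈ cbDeriv (OrdSpace o) α ↔ ω ^ α ∣ ordVal ξ ∧ (0 < α → ordVal ξ ≠ 0) := by
  induction α using WellFoundedLT.induction generalizing ξ with
  | ind α ih =>
    rw [mem_cbDeriv]
    constructor
    · intro h
      refine ⟨opow_dvd_of_dense fun β hβ η hη => ?_, fun hα h0 => ?_⟩
      · obtain ⟨-, hd⟩ := (mem_derivedSet_iff_of_wellFounded _ _).1 (h β hβ)
        obtain ⟨y, rfl⟩ := exists_ordVal (hη.le.trans (ordVal_le ξ))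
        obtain ⟨z, hz, h1, h2⟩ := hd y hη
        exact ⟨ordVal z, h1, h2, ((ih β hβ z).1 hz).1⟩
      · obtain ⟨⟨b, hb⟩, -⟩ := (mem_derivedSet_iff_of_wellFounded _ _).1 (h 0 hα)
        rw [← ordVal_lt, h0] at hb
        exact absurd hb (not_lt.2 zero_le)
    · rintro ⟨hdvd, hne⟩ β hβ
      have hne := hne (lt_of_le_of_lt zero_le hβ)
      rw [mem_derivedSet_iff_of_wellFounded]
      constructor
      · obtain ⟨b, hb⟩ := exists_ordVal (o := o) (ξ := 0) zero_le
        exact ⟨b, by rw [← ordVal_lt, hb]; exact pos_iff_ne_zero.2 hne⟩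
      · intro b hb
        obtain ⟨ζ, h1, h2, h3, h4⟩ := exists_dvd_between hβ hdvd (ordVal_lt.2 hb)
        obtain ⟨z, rfl⟩ := exists_ordVal (h2.le.trans (ordVal_le ξ))
        exact ⟨z, (ih β hβ z).2 ⟨h4, fun _ => h3⟩, h1, h2⟩

theorem ncard_cbDeriv_ordSpace (α : Ordinal) (hα : 0 < α) (k : ℕ) :
    (cbDeriv (OrdSpace (ω ^ α * k)) α).ncard = k := by
  have hp : 0 < ω ^ α := opow_pos α omega0_pos
  have himg : ordVal '' cbDeriv (OrdSpace (ω ^ α * k)) α =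
      (fun i : ℕ => ω ^ α * ((i + 1 : ℕ) : Ordinal)) '' (Finset.range k : Set ℕ) := by
    ext ζ
    constructor
    · rintro ⟨ξ, hξ, rfl⟩
      obtain ⟨⟨δ, hδ⟩, hne⟩ := (mem_cbDeriv_ordSpace α ξ).1 hξ
      have hne := hne hα
      have hle := ordVal_le ξ
      rw [hδ] at hle hne
      have hδk : δ ≤ k := le_of_mul_le_mul_left hle hp
      obtain ⟨i, rfl⟩ := lt_omega0.1 (lt_of_le_of_lt hδk (natCast_lt_omega0 k))
      have hi0 : i ≠ 0 := by rintro rfl; simp at hne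
      have hik : i ≤ k := by exact_mod_cast hδk
      refine ⟨i - 1, by simp; omega, ?_⟩
      simp only [hδ]
      congr 2
      omega
    · rintro ⟨i, hi, rfl⟩
      have hik : i + 1 ≤ k := by simpa using hi
      have hle : ω ^ α * ((i + 1 : ℕ) : Ordinal) ≤ ω ^ α * k := by
        gcongr
      obtain ⟨ξ, hξ⟩ := exists_ordVal hle
      refine ⟨ξ, (mem_cbDeriv_ordSpace α ξ).2 ⟨hξ ▸ dvd_mul_right _ _, fun _ => ?_⟩, hξ⟩
      rw [hξ]
      exact mul_ne_zero hp.ne' (by exact_mod_cast Nat.succ_ne_zero i)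
  rw [← Set.ncard_image_of_injective _ ordVal_injective, himg, Set.ncard_image_of_injective]
  · simp
  · intro i j hij
    have hij' : ω ^ α * ((i + 1 : ℕ) : Ordinal) = ω ^ α * ((j + 1 : ℕ) : Ordinal) := hij
    have := mul_left_cancel₀ hp.ne' hij'
    have : i + 1 = j + 1 := by exact_mod_cast this
    omega

/-- The point `0` of an ordinal space is isolated. -/
theorem exists_isolated_ordSpace (o : Ordinal) : ∃ ξ : OrdSpace o, ξ ∉ derivedSet Set.univ := by
  obtain ⟨b, hb⟩ := exists_ordVal (o := o) (ξ := 0) zero_le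
  refine ⟨b, fun h => ?_⟩
  obtain ⟨⟨a, ha⟩, -⟩ := (mem_derivedSet_iff_of_wellFounded _ _).1 h
  rw [← ordVal_lt, hb] at ha
  exact absurd ha (not_lt.2 zero_le)

end Ordinals

/-! ### The critical omega-limit set -/

section OmegaLimit

variable {f : unitI → unitI} {c : unitI}

theorem mem_omegaLimitSet_iff {w : unitI} :
    w ∈ omegaLimitSet f c ↔ MapClusterPt w atTop (fun m => f^[m] c) := by
  rw [mapClusterPt_iff_frequently]
  simp only [omegaLimitSet, mem_iInter, mem_closure_iff_nhds, frequently_atTop]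
  constructor
  · intro h V hV N
    obtain ⟨y, hyV, m, hm, rfl⟩ := h N V hV
    exact ⟨m, hm, hyV⟩
  · intro h N V hV
    obtain ⟨m, hm, hmV⟩ := h V hV N
    exact ⟨_, hmV, m, hm, rfl⟩

theorem isClosed_omegaLimitSet : IsClosed (omegaLimitSet f c) :=
  isClosed_iInter fun _ => isClosed_closure

theorem mapsTo_omegaLimitSet (hf : Continuous f) :
    MapsTo f (omegaLimitSet f c) (omegaLimitSet f c) := by
  intro w hw
  rw [mem_omegaLimitSet_iff, mapClusterPt_iff_frequently] at hw ⊢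
  intro V hV
  have h := hw _ (hf.continuousAt hV)
  rw [frequently_atTop] at h ⊢
  intro N
  obtain ⟨m, hm, hmV⟩ := h N
  refine ⟨m + 1, by omega, ?_⟩
  rw [Function.iterate_succ_apply']
  exact hmV

theorem surjOn_omegaLimitSet (hf : Continuous f) :
    SurjOn f (omegaLimitSet f c) (omegaLimitSet f c) := by
  intro w hw
  rw [mem_omegaLimitSet_iff, mapClusterPt_iff_ultrafilter] at hw
  obtain ⟨U, hU, hlim⟩ := hw
  let V : Ultrafilter unitI := U.map (fun m => f^[m - 1] c)
  have hV : (V : Filter unitI) ≤ 𝓝 V.lim := V.le_nhds_lim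
  have hVt : Tendsto (fun m => f^[m - 1] c) U (𝓝 V.lim) := hV
  refine ⟨V.lim, ?_, ?_⟩
  · rw [mem_omegaLimitSet_iff, mapClusterPt_iff_ultrafilter]
    refine ⟨U.map (fun m => m - 1), ?_, hVt⟩
    exact (tendsto_sub_atTop_nat 1).mono_left hU
  · have h1 : Tendsto (fun m => f (f^[m - 1] c)) U (𝓝 (f V.lim)) :=
      (hf.tendsto _).comp hVt
    refine tendsto_nhds_unique (h1.congr' ?_) hlim
    filter_upwards [hU (eventually_ge_atTop 1)] with m hm
    rw [← Function.iterate_succ_apply' f, Nat.succ_eq_add_one, Nat.sub_add_cancel hm]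

/-- If the critical orbit converges along an arithmetic progression of times, then its omega-limit
set is finite. -/
theorem finite_omegaLimitSet_of_tendsto (hf : Continuous f) {q : unitI} {m₀ p : ℕ} (hp : 0 < p)
    (h : Tendsto (fun j => f^[m₀ + j * p] c) atTop (𝓝 q)) : (omegaLimitSet f c).Finite := by
  refine ((Set.finite_Iio p).image (fun i => f^[i] q)).subset fun w hw => ?_
  rw [mem_omegaLimitSet_iff, mapClusterPt_iff_ultrafilter] at hw
  obtain ⟨U, hU, hlim⟩ := hw
  have hmem : (⋃ i ∈ Set.Iio p, {m : ℕ | (m - m₀) % p = i}) ∈ U := by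
    refine mem_of_superset univ_mem fun m _ => ?_
    simp only [mem_iUnion]
    exact ⟨(m - m₀) % p, Nat.mod_lt _ hp, rfl⟩
  obtain ⟨i, hi, hiU⟩ := (Ultrafilter.finite_biUnion_mem_iff (Set.finite_Iio p)).1 hmem
  refine ⟨i, hi, ?_⟩
  have hdiv : Tendsto (fun m : ℕ => (m - m₀) / p) U atTop :=
    ((Nat.tendsto_div_const_atTop hp.ne').comp (tendsto_sub_atTop_nat m₀)).mono_left hU
  have h1 : Tendsto (fun m => f^[i] (f^[m₀ + (m - m₀) / p * p] c)) U (𝓝 (f^[i] q)) :=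
    ((hf.iterate i).tendsto q).comp (h.comp hdiv)
  refine tendsto_nhds_unique (h1.congr' ?_) hlim
  filter_upwards [hU (eventually_ge_atTop m₀), hiU] with m hm hmi
  rw [← Function.iterate_add_apply]
  congr 1
  have h2 := Nat.div_add_mod (m - m₀) p
  have h3 : (m - m₀) % p = i := hmi
  rw [h3, mul_comm] at h2
  omega

theorem finite_omegaLimitSet_of_eq (hf : Continuous f) {m₀ p : ℕ} (hp : 0 < p)
    (h : f^[m₀ + p] c = f^[m₀] c) : (omegaLimitSet f c).Finite := by
  refine finite_omegaLimitSet_of_tendsto hf hp (q := f^[m₀] c) (m₀ := m₀) ?_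
  have : ∀ j : ℕ, f^[m₀ + j * p] c = f^[m₀] c := by
    intro j
    induction j with
    | zero => simp
    | succ j ih =>
      rw [show m₀ + (j + 1) * p = p + (m₀ + j * p) by ring, Function.iterate_add_apply, ih,
        ← Function.iterate_add_apply, add_comm, h]
  simp only [this]
  exact tendsto_const_nhds

/-- The only point of the omega-limit set in the closure of some neighbourhood of an isolated
point is that point. -/
theorem exists_isolating {q : omegaLimitSet f c}
    (hq : q ∉ derivedSet (univ : Set (omegaLimitSet f c))) :
    ∃ V ∈ 𝓝 q.1, ∀ w ∈ closure V, w ∈ omegaLimitSet f c → w = q.1 := by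
  rw [mem_derivedSet, accPt_iff_nhds] at hq
  push Not at hq
  obtain ⟨U, hU, h⟩ := hq
  obtain ⟨V, hV, hVU⟩ := mem_nhds_subtype _ _ _ |>.1 hU
  obtain ⟨V', hV', hcl, hV'V⟩ := exists_mem_nhds_isClosed_subset hV
  refine ⟨V', hV', fun w hw hwW => ?_⟩
  rw [hcl.closure_eq] at hw
  exact congrArg Subtype.val (h ⟨w, hwW⟩ ⟨hVU (hV'V hw), mem_univ _⟩)

/-- If `c` were recurrent, its orbit would lie in the omega-limit set and visit an isolated point
twice, so it would be eventually periodic. -/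
theorem critical_notMem (hf : Continuous f) (hinf : (omegaLimitSet f c).Infinite)
    (hiso : ∃ q : omegaLimitSet f c, q ∉ derivedSet univ) : c ∉ omegaLimitSet f c := by
  intro hc
  obtain ⟨q, hq⟩ := hiso
  obtain ⟨V, hV, h⟩ := exists_isolating hq
  have horb : ∀ m, f^[m] c ∈ omegaLimitSet f c := fun m => (mapsTo_omegaLimitSet hf).iterate m hc
  have hfr := mapClusterPt_iff_frequently.1 (mem_omegaLimitSet_iff.1 q.2) V hV
  rw [frequently_atTop] at hfr
  obtain ⟨k, -, hk⟩ := hfr 0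
  obtain ⟨l, hl, hl'⟩ := hfr (k + 1)
  have e1 := h _ (subset_closure hk) (horb k)
  have e2 := h _ (subset_closure hl') (horb l)
  refine hinf (finite_omegaLimitSet_of_eq hf (m₀ := k) (p := l - k) (by omega) ?_)
  rw [Nat.add_sub_cancel' (by omega), e2, e1]

/-- An isolated point of an infinite omega-limit set is not periodic: otherwise the critical orbit,
once close to its cycle, would stay there and converge to it. -/
theorem not_isolated_of_periodic (hf : Continuous f) (hinf : (omegaLimitSet f c).Infinite)
    {q : omegaLimitSet f c} {p : ℕ} (hp : 0 < p) (hper : f^[p] q.1 = q.1) :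
    q ∈ derivedSet (univ : Set (omegaLimitSet f c)) := by
  by_contra hq
  obtain ⟨V, hV, h⟩ := exists_isolating hq
  have hcl : ∀ u : Ultrafilter ℕ, (u : Filter ℕ) ≤ atTop → (∀ᶠ m in (u : Filter ℕ), f^[m] c ∈ V) →
      Tendsto (fun m => f^[m] c) u (𝓝 q.1) := by
    intro u hu huV
    have ht : Tendsto (fun m => f^[m] c) u (𝓝 (u.map (fun m => f^[m] c)).lim) :=
      (u.map (fun m => f^[m] c)).le_nhds_lim
    have h1 : (u.map (fun m => f^[m] c)).lim ∈ omegaLimitSet f c := by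
      rw [mem_omegaLimitSet_iff, mapClusterPt_iff_ultrafilter]
      exact ⟨u, hu, ht⟩
    rwa [h _ (mem_closure_of_tendsto ht huV) h1] at ht
  have hret : ∀ᶠ m in atTop, f^[m] c ∈ V → f^[p + m] c ∈ V := by
    refine mem_iff_ultrafilter.2 fun u hu => ?_
    by_cases huV : ∀ᶠ m in (u : Filter ℕ), f^[m] c ∈ V
    · have h1 := ((hf.iterate p).tendsto q.1).comp (hcl u hu huV)
      rw [hper] at h1
      filter_upwards [h1.eventually hV] with m hm _
      rw [Function.iterate_add_apply]
      exact hm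
    · rw [← Ultrafilter.eventually_not] at huV
      filter_upwards [huV] with m hm hm'
      exact absurd hm' hm
  obtain ⟨N, hN⟩ := eventually_atTop.1 hret
  have hfr := mapClusterPt_iff_frequently.1 (mem_omegaLimitSet_iff.1 q.2) V hV
  obtain ⟨m₀, hm₀, hm₀V⟩ := frequently_atTop.1 hfr N
  have hstay : ∀ j : ℕ, f^[m₀ + j * p] c ∈ V := by
    intro j
    induction j with
    | zero => simpa using hm₀V
    | succ j ih =>
      rw [show m₀ + (j + 1) * p = p + (m₀ + j * p) by ring]
      exact hN _ (by nlinarith) ih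
  refine hinf (finite_omegaLimitSet_of_tendsto hf hp (q := q.1) (m₀ := m₀) ?_)
  rw [tendsto_iff_ultrafilter]
  intro u hu
  have hj : Tendsto (fun j : ℕ => m₀ + j * p) atTop atTop :=
    tendsto_atTop_mono (fun j => by
      have : j * 1 ≤ j * p := Nat.mul_le_mul_left j hp
      simp only [id]
      omega) tendsto_id
  have hev : ∀ᶠ j in (u : Filter ℕ), f^[m₀ + j * p] c ∈ V := Eventually.of_forall hstay
  exact hcl (u.map fun j => m₀ + j * p) (hj.mono_left hu) hev

end OmegaLimit

/-! ### Fixed points and two-cycles of locally eventually onto unimodal maps -/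

section Unimodal

variable {f : unitI → unitI} {c : unitI}

theorem LEO.surjective (hleo : LEO f) : Function.Surjective f := by
  obtain ⟨N, hN⟩ := hleo 1 one_pos 0
  cases N with
  | zero =>
    exfalso
    have h1 : (1 : unitI) ∈ f^[0] '' Metric.ball (0 : unitI) 1 := hN ▸ mem_univ _
    simp [Subtype.dist_eq] at h1
  | succ N =>
    intro y
    have hy : y ∈ f^[N + 1] '' Metric.ball (0 : unitI) 1 := hN ▸ mem_univ _
    obtain ⟨x, -, rfl⟩ := hy
    exact ⟨f^[N] x, (Function.iterate_succ_apply' f N x).symm⟩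

theorem LEO.exists_forall_image (hleo : LEO f) {U : Set unitI} (hU : IsOpen U) (hne : U.Nonempty) :
    ∃ N, ∀ n ≥ N, f^[n] '' U = univ := by
  obtain ⟨x, hx⟩ := hne
  obtain ⟨ε, hε, hεU⟩ := Metric.isOpen_iff.1 hU x hx
  obtain ⟨N, hN⟩ := hleo ε hε x
  refine ⟨N, fun n hn => ?_⟩
  obtain ⟨d, rfl⟩ := Nat.exists_eq_add_of_le hn
  rw [add_comm, Function.iterate_add, image_comp]
  have h1 : f^[N] '' U = univ := univ_subset_iff.1 (hN ▸ image_mono hεU)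
  rw [h1, image_univ, (hleo.surjective.iterate d).range_eq]

theorem LEO.eq_univ_of_mapsTo (hleo : LEO f) {S U : Set unitI} (hS : MapsTo f S S)
    (hU : IsOpen U) (hne : U.Nonempty) (hUS : U ⊆ S) : S = univ := by
  obtain ⟨N, hN⟩ := hleo.exists_forall_image hU hne
  rw [← univ_subset_iff, ← hN N le_rfl]
  rintro _ ⟨x, hx, rfl⟩
  exact hS.iterate N (hUS hx)

theorem Unimodal.injOn_uIcc (hf : Unimodal f c) {a b : unitI}
    (h : (a ≤ c ∧ b ≤ c) ∨ (c ≤ a ∧ c ≤ b)) :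
    InjOn f (uIcc a b) ∧ MapsTo f (uIcc a b) (uIcc (f a) (f b)) := by
  obtain ⟨-, -, -, hmono, hanti⟩ := hf
  rcases h with ⟨ha, hb⟩ | ⟨ha, hb⟩
  · have hsub : uIcc a b ⊆ {x | x ≤ c} := fun z hz => hz.2.trans (sup_le ha hb)
    exact ⟨hmono.injOn.mono hsub, (hmono.monotoneOn.mono hsub).mapsTo_uIcc⟩
  · have hsub : uIcc a b ⊆ {x | c ≤ x} := fun z hz => (le_inf ha hb).trans hz.1
    exact ⟨hanti.injOn.mono hsub, (hanti.antitoneOn.mono hsub).mapsTo_uIcc⟩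

/-- Points with the same itinerary coincide: all iterates are injective on the interval between
them, whereas a high iterate maps each of two disjoint subintervals onto `[0,1]`. -/
theorem eq_of_same_itinerary (hf : Unimodal f c) (hleo : LEO f) {x y : unitI}
    (h : ∀ n, (f^[n] x ≤ c ∧ f^[n] y ≤ c) ∨ (c ≤ f^[n] x ∧ c ≤ f^[n] y)) : x = y := by
  have key : ∀ n, InjOn f^[n] (uIcc x y) ∧ MapsTo f^[n] (uIcc x y) (uIcc (f^[n] x) (f^[n] y)) := by
    intro n
    induction n with
    | zero => exact ⟨injOn_id _, mapsTo_id _⟩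
    | succ n ih =>
      obtain ⟨h1, h2⟩ := hf.injOn_uIcc (h n)
      rw [Function.iterate_succ']
      exact ⟨h1.comp ih.1 ih.2, h2.comp ih.2⟩
  wlog hxy : x < y generalizing x y
  · rcases lt_or_eq_of_le (not_lt.1 hxy) with hlt | heq
    · refine (this (x := y) (y := x) (fun n => (h n).imp And.symm And.symm) (fun n => ?_) hlt).symm
      rw [uIcc_comm, uIcc_comm (f^[n] y)]
      exact key n
    · exact heq.symm
  exfalso
  obtain ⟨t, hxt, hty⟩ := exists_between hxy
  obtain ⟨N₁, h₁⟩ := hleo.exists_forall_image isOpen_Ioo (nonempty_Ioo.2 hxt)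
  obtain ⟨N₂, h₂⟩ := hleo.exists_forall_image isOpen_Ioo (nonempty_Ioo.2 hty)
  have e₁ := h₁ (max N₁ N₂) (le_max_left _ _)
  have e₂ := h₂ (max N₁ N₂) (le_max_right _ _)
  obtain ⟨a, ha, ha0⟩ : (0 : unitI) ∈ f^[max N₁ N₂] '' Ioo x t := e₁ ▸ mem_univ _
  obtain ⟨b, hb, hb0⟩ : (0 : unitI) ∈ f^[max N₁ N₂] '' Ioo t y := e₂ ▸ mem_univ _
  have hab : a = b := by
    refine (key (max N₁ N₂)).1 ?_ ?_ (ha0.trans hb0.symm)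
    · rw [uIcc_of_le hxy.le]
      exact ⟨ha.1.le, ha.2.le.trans hty.le⟩
    · rw [uIcc_of_le hxy.le]
      exact ⟨hxt.le.trans hb.1.le, hb.2.le⟩
  exact absurd (ha.2.trans hb.1) (by rw [hab]; exact lt_irrefl _)

/-- If the critical omega-limit set is infinite, every fixed point lies to the right of `c`. -/
theorem critical_le_of_fixed (hf : Unimodal f c) (hleo : LEO f)
    (hinf : (omegaLimitSet f c).Infinite) {q : unitI} (hq : f q = q) : c ≤ q := by
  obtain ⟨hcont, hc0, hc1, hmono, hanti⟩ := hf
  have hc1' : c < 1 := hc1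
  by_contra! hqc
  have hIic : ∀ x, 0 < x → x ≤ c → ¬ f x ≤ x := by
    intro x hx0 hxc hfx
    have hS : MapsTo f (Iic x) (Iic x) := fun z hz =>
      (hmono.monotoneOn (le_trans hz hxc) hxc hz).trans hfx
    have := hleo.eq_univ_of_mapsTo hS isOpen_Iio ⟨0, hx0⟩ Iio_subset_Iic_self
    have h1 : (1 : unitI) ∈ Iic x := this ▸ mem_univ _
    exact absurd (lt_of_le_of_lt (h1.trans hxc) hc1') (lt_irrefl _)
  have hq0 : q = 0 := by
    by_contra hne
    exact hIic q (lt_of_le_of_ne q.2.1 (Ne.symm hne)) hqc.le hq.le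
  rw [hq0] at hq
  by_cases h1 : f 1 = 0
  · -- Here `c ↦ 1 ↦ 0 ↦ 0`, so the critical orbit is eventually constant.
    have hfc : f c = 1 := by
      obtain ⟨x, hx⟩ := hleo.surjective 1
      refine le_antisymm (f c).2.2 (hx ▸ ?_)
      rcases le_total x c with h | h
      · exact hmono.monotoneOn h (le_refl c) h
      · exact hanti.antitoneOn (le_refl c) h h
    refine hinf (finite_omegaLimitSet_of_eq hcont (m₀ := 2) (p := 1) one_pos ?_)
    simp [hfc, h1, hq]
  · -- Here `[min (f 1) c, 1]` is a proper invariant interval.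
    have h1' : 0 < f 1 := lt_of_le_of_ne (f 1).2.1 (Ne.symm h1)
    have hS : MapsTo f (Ici (min (f 1) c)) (Ici (min (f 1) c)) := by
      intro z hz
      rcases le_total z c with h | h
      · have hz0 : 0 < z := lt_of_lt_of_le (lt_min h1' hc0) hz
        exact le_trans hz (not_le.1 (hIic z hz0 h)).le
      · exact (min_le_left _ _).trans (hanti.antitoneOn h hc1'.le z.2.2)
    have := hleo.eq_univ_of_mapsTo (U := Ioi c) hS isOpen_Ioi ⟨1, hc1'⟩
      (fun z hz => mem_Ici.2 ((min_le_right _ _).trans (le_of_lt (mem_Ioi.1 hz))))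
    have h0 : (0 : unitI) ∈ Ici (min (f 1) c) := this ▸ mem_univ _
    exact absurd h0 (not_le.2 (lt_min h1' hc0))

/-- A decreasing map has at most one fixed point, and all fixed points lie where `f` decreases. -/
theorem fixed_unique (hf : Unimodal f c) (hleo : LEO f)
    (hinf : (omegaLimitSet f c).Infinite) {p q : unitI} (hp : f p = p) (hq : f q = q) : p = q := by
  have hpc := critical_le_of_fixed hf hleo hinf hp
  have hqc := critical_le_of_fixed hf hleo hinf hq
  have hanti := hf.2.2.2.2.antitoneOn
  rcases le_total p q with h | h
  · have := hanti hpc hqc h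
    rw [hp, hq] at this
    exact le_antisymm h this
  · have := hanti hqc hpc h
    rw [hp, hq] at this
    exact le_antisymm this h

theorem iterate_two_cycle {a b : unitI} (hab : f a = b) (hba : f b = a) (n : ℕ) :
    (Even n → f^[n] a = a ∧ f^[n] b = b) ∧ (¬ Even n → f^[n] a = b ∧ f^[n] b = a) := by
  induction n with
  | zero => simp
  | succ n ih =>
    rw [Function.iterate_succ_apply', Function.iterate_succ_apply', Nat.even_add_one]
    grind

/-- The points of a two-cycle lie on opposite sides of `c`. -/
theorem two_cycle_sides (hf : Unimodal f c) (hleo : LEO f) {a b : unitI} (hne : a ≠ b)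
    (hab : f a = b) (hba : f b = a) : (a < c ∧ c < b) ∨ (b < c ∧ c < a) := by
  by_contra hcon
  have hside : (a ≤ c ∧ b ≤ c) ∨ (c ≤ a ∧ c ≤ b) := by grind
  refine hne (eq_of_same_itinerary hf hleo fun n => ?_)
  have := iterate_two_cycle hab hba n
  by_cases hn : Even n <;> grind

theorem two_cycle_unique (hf : Unimodal f c) (hleo : LEO f) {a b a' b' : unitI}
    (hab : f a = b) (hba : f b = a) (hab' : f a' = b') (hba' : f b' = a')
    (h : a < c ∧ c < b) (h' : a' < c ∧ c < b') : a = a' := by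
  refine eq_of_same_itinerary hf hleo fun n => ?_
  have h1 := iterate_two_cycle hab hba n
  have h2 := iterate_two_cycle hab' hba' n
  by_cases hn : Even n
  · rw [(h1.1 hn).1, (h2.1 hn).1]
    exact Or.inl ⟨h.1.le, h'.1.le⟩
  · rw [(h1.2 hn).1, (h2.2 hn).1]
    exact Or.inr ⟨h.2.le, h'.2.le⟩

/-- A two-element set permuted by `f` is a two-cycle around `c`, as `f` has only one fixed point. -/
theorem exists_two_cycle (hf : Unimodal f c) (hleo : LEO f)
    (hinf : (omegaLimitSet f c).Infinite) {S : Set unitI} (hS : S.ncard = 2)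
    (hmap : MapsTo f S S) (hinj : InjOn f S) :
    ∃ a b, a < c ∧ c < b ∧ f a = b ∧ f b = a ∧ S = {a, b} := by
  obtain ⟨a, b, hne, rfl⟩ := Set.ncard_eq_two.1 hS
  have ha := hmap (mem_insert a {b})
  have hb := hmap (mem_insert_of_mem a (mem_singleton b))
  have hfne : f a ≠ f b := fun h => hne (hinj (by simp) (by simp) h)
  simp only [mem_insert_iff, mem_singleton_iff] at ha hb
  have hcyc : f a = b ∧ f b = a := by
    rcases ha with ha | ha
    · rcases hb with hb | hb
      · exact absurd (ha.trans hb.symm) hfne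
      · exact absurd (fixed_unique hf hleo hinf ha hb) hne
    · rcases hb with hb | hb
      · exact ⟨ha, hb⟩
      · exact absurd (ha.trans hb.symm) hfne
  rcases two_cycle_sides hf hleo hne hcyc.1 hcyc.2 with h | h
  · exact ⟨a, b, h.1, h.2, hcyc.1, hcyc.2, rfl⟩
  · exact ⟨b, a, h.1, h.2, hcyc.2, hcyc.1, pair_comm a b⟩

theorem two_set_unique (hf : Unimodal f c) (hleo : LEO f)
    (hinf : (omegaLimitSet f c).Infinite) {S T : Set unitI} (hS : S.ncard = 2)
    (hSm : MapsTo f S S) (hSi : InjOn f S) (hT : T.ncard = 2)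
    (hTm : MapsTo f T T) (hTi : InjOn f T) : S = T := by
  obtain ⟨a, b, h1, h2, h3, h4, rfl⟩ := exists_two_cycle hf hleo hinf hS hSm hSi
  obtain ⟨a', b', h1', h2', h3', h4', rfl⟩ := exists_two_cycle hf hleo hinf hT hTm hTi
  have := two_cycle_unique hf hleo h3 h4 h3' h4' ⟨h1, h2⟩ ⟨h1', h2'⟩
  subst this
  rw [← h3, ← h3']

/-- Arithmetic constraints on two finite sets `A`, `B` permuted by `f` which intersect. They all
follow from `f` having at most one fixed point and at most one two-cycle. -/
theorem card_constraints (hf : Unimodal f c) (hleo : LEO f)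
    (hinf : (omegaLimitSet f c).Infinite) {A B : Set unitI}
    (hAf : A.Finite) (hAm : MapsTo f A A) (hAi : InjOn f A)
    (hBf : B.Finite) (hBm : MapsTo f B B) (hBi : InjOn f B) (hAB : (A ∩ B).Nonempty) :
    (B.ncard = 1 → A.ncard ≠ 2) ∧ (B.ncard = 2 → 2 ≤ A.ncard ∧ A.ncard ≠ 4) ∧
      (B.ncard = 4 → A.ncard ≠ 2) := by
  -- A two-element permuted set is contained in any permuted set it meets.
  have hsub : ∀ {S T : Set unitI}, S.ncard = 2 → MapsTo f S S → InjOn f S → MapsTo f T T →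
      (S ∩ T).Nonempty → S ⊆ T := by
    rintro S T hS hSm hSi hTm ⟨x, hxS, hxT⟩
    obtain ⟨a, b, -, -, hab, hba, rfl⟩ := exists_two_cycle hf hleo hinf hS hSm hSi
    rcases hxS with rfl | rfl
    · rintro z (rfl | rfl)
      · exact hxT
      · exact hab ▸ hTm hxT
    · rintro z (rfl | rfl)
      · exact hba ▸ hTm hxT
      · exact hxT
  -- A four-element permuted set contains no permuted two-element set.
  have hfour : ∀ {S T : Set unitI}, S.ncard = 2 → MapsTo f S S → InjOn f S → T.ncard = 4 →
      T.Finite → MapsTo f T T → InjOn f T → S ⊆ T → False := by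
    intro S T hS hSm hSi hT hTf hTm hTi hST
    have hcard : (T \ S).ncard = 2 := by
      rw [Set.ncard_sdiff hST (hTf.subset hST), hS, hT]
    have hSsurj : SurjOn f S S :=
      (((hTf.subset hST).injOn_iff_bijOn_of_mapsTo hSm).1 hSi).surjOn
    have hmap : MapsTo f (T \ S) (T \ S) := by
      rintro x ⟨hxT, hxS⟩
      refine ⟨hTm hxT, fun h => hxS ?_⟩
      obtain ⟨y, hy, hyx⟩ := hSsurj h
      rwa [← hTi (hST hy) hxT hyx]
    have heq := two_set_unique hf hleo hinf hS hSm hSi hcard hmap (hTi.mono sdiff_subset)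
    have hne : S.Nonempty := Set.nonempty_of_ncard_ne_zero (by omega)
    obtain ⟨x, hx⟩ := hne
    exact (heq ▸ hx : x ∈ T \ S).2 hx
  refine ⟨fun hB hA => ?_, fun hB => ?_, fun hB hA => ?_⟩
  · have h1 := Set.ncard_le_ncard (hsub hA hAm hAi hBm hAB) hBf
    omega
  · have hBA := hsub hB hBm hBi hAm (by rwa [inter_comm])
    refine ⟨hB ▸ Set.ncard_le_ncard hBA hAf, fun hA => ?_⟩
    exact hfour hB hBm hBi hA hAf hAm hAi hBA
  · exact hfour hA hAm hAi hB hBf hBm hBi (hsub hA hAm hAi hBm hAB)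

end Unimodal

/-! ### The derivatives of the omega-limit set and of the set of inhomogeneities -/

section Assembly

variable {f : unitI → unitI} {c : unitI}

/-- The restriction of `f` to the omega-limit set of `c`. -/
def omegaMap (hf : Continuous f) : omegaLimitSet f c → omegaLimitSet f c :=
  (mapsTo_omegaLimitSet hf).restrict

theorem omegaMap_val (hf : Continuous f) (w : omegaLimitSet f c) :
    (omegaMap hf w).1 = f w.1 := rfl

theorem continuous_omegaMap (hf : Continuous f) : Continuous (omegaMap (c := c) hf) :=
  hf.restrict (mapsTo_omegaLimitSet hf)

theorem surjective_omegaMap (hf : Continuous f) : Function.Surjective (omegaMap (c := c) hf) := by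
  rintro ⟨w, hw⟩
  obtain ⟨v, hv, rfl⟩ := surjOn_omegaLimitSet hf hw
  exact ⟨⟨v, hv⟩, rfl⟩

theorem iterate_omegaMap_val (hf : Continuous f) (k : ℕ) (w : omegaLimitSet f c) :
    ((omegaMap hf)^[k] w).1 = f^[k] w.1 := by
  induction k with
  | zero => rfl
  | succ k ih => rw [Function.iterate_succ_apply', Function.iterate_succ_apply', omegaMap_val, ih]

/-- The set of inhomogeneities is the inverse limit of `f` restricted to the omega-limit set. -/
def inhomHomeo (hf : Continuous f) : Inhom f c ≃ₜ BackOrbit (omegaMap (c := c) hf) where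
  toFun x := ⟨fun i => ⟨x.1.1 i, x.2 i⟩, fun i => Subtype.ext (x.1.2 i)⟩
  invFun y := ⟨⟨fun i => (y.1 i).1, fun i => congrArg Subtype.val (y.2 i)⟩, fun i => (y.1 i).2⟩
  left_inv _ := rfl
  right_inv _ := rfl
  continuous_toFun := Continuous.subtype_mk (continuous_pi fun i => Continuous.subtype_mk
    ((continuous_apply i).comp (continuous_subtype_val.comp continuous_subtype_val)) _) _
  continuous_invFun := Continuous.subtype_mk (Continuous.subtype_mk (continuous_pi fun i =>
    continuous_subtype_val.comp (BackOrbit.continuous_coord i)) _) _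

/-- As `c` is not in the omega-limit set, two distinct points of that set with the same image lie
on opposite sides of `c` and remain so in the limit. -/
theorem isClosed_omegaMap_pairs (hf : Unimodal f c) (hc : c ∉ omegaLimitSet f c) :
    IsClosed {p : omegaLimitSet f c × omegaLimitSet f c |
      p.1 ≠ p.2 ∧ omegaMap hf.1 p.1 = omegaMap hf.1 p.2} := by
  have : {p : omegaLimitSet f c × omegaLimitSet f c |
      p.1 ≠ p.2 ∧ omegaMap hf.1 p.1 = omegaMap hf.1 p.2} =
      {p : omegaLimitSet f c × omegaLimitSet f c |
        (p.1.1 ≤ c ∧ c ≤ p.2.1) ∨ (p.2.1 ≤ c ∧ c ≤ p.1.1)} ∩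
        {p | omegaMap hf.1 p.1 = omegaMap hf.1 p.2} := by
    ext ⟨u, v⟩
    simp only [mem_ofPred_eq, mem_inter_iff, and_congr_left_iff]
    intro huv
    have huv' : f u.1 = f v.1 := congrArg Subtype.val huv
    constructor
    · intro hne
      by_contra! hcon
      apply hne
      apply Subtype.ext
      rcases le_total u.1 c with hu | hu
      · exact hf.2.2.2.1.injOn hu (hcon.1 hu).le huv'
      · exact hf.2.2.2.2.injOn hu (not_lt.1 fun h => absurd (hcon.2 h.le) (not_lt.2 hu)) huv'
    · rintro h rfl
      apply hc
      have : u.1 = c := by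
        rcases h with h | h
        · exact le_antisymm h.1 h.2
        · exact le_antisymm h.1 h.2
      have hmem := u.2
      rwa [this] at hmem
  rw [this]
  have h1 : Continuous fun p : omegaLimitSet f c × omegaLimitSet f c => p.1.1 :=
    continuous_subtype_val.comp continuous_fst
  have h2 : Continuous fun p : omegaLimitSet f c × omegaLimitSet f c => p.2.1 :=
    continuous_subtype_val.comp continuous_snd
  refine IsClosed.inter (IsClosed.union ?_ ?_) ?_
  · exact ((isClosed_Iic (a := c)).preimage h1).inter ((isClosed_Ici (a := c)).preimage h2)
  · exact ((isClosed_Iic (a := c)).preimage h2).inter ((isClosed_Ici (a := c)).preimage h1)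
  · exact isClosed_eq ((continuous_omegaMap hf.1).comp continuous_fst)
      ((continuous_omegaMap hf.1).comp continuous_snd)

end Assembly

section Abstract

variable {W : Type*} {g : W → W}

theorem BackOrbit.surjective_coord_zero (hs : Function.Surjective g) :
    Function.Surjective fun x : BackOrbit g => x.1 0 := by
  intro w
  choose s hs using hs
  refine ⟨⟨fun i => s^[i] w, fun i => ?_⟩, rfl⟩
  simp only [Function.iterate_succ_apply', hs]

variable [TopologicalSpace W]

/-- Compactness lifts accumulation points through the surjection to the initial coordinate. -/
theorem BackOrbit.second_subset_image [CompactSpace W] [T2Space W] (hg : Continuous g)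
    (hs : Function.Surjective g) :
    derivedSet (derivedSet (univ : Set W)) ⊆
      (fun x : BackOrbit g => x.1 0) '' cbDeriv (BackOrbit g) 2 := by
  have := BackOrbit.compactSpace hg
  rw [cbDeriv_two]
  refine fun w hw => exists_lift_derivedSet (continuous_coord 0) (fun v hv => ?_) hw
  refine exists_lift_derivedSet (continuous_coord 0) (fun u _ => ?_) hv
  obtain ⟨x, hx⟩ := surjective_coord_zero hs u
  exact ⟨x, mem_univ _, hx⟩

/-- A finite derivative of the inverse limit is invariant under the shift, hence consists of
periodic backward orbits. -/
theorem BackOrbit.periodic_of_finite (hg : Continuous g) {α : Ordinal}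
    (hfin : (cbDeriv (BackOrbit g) α).Finite) {x : BackOrbit g}
    (hx : x ∈ cbDeriv (BackOrbit g) α) (k : ℕ) : x.1 k ∈ Function.periodicPts g := by
  by_contra hk
  have hinj : Function.Injective (x.drop k).1 := injective_of_not_periodic (by simpa using hk)
  refine Set.infinite_of_injective_forall_mem (f := fun j => (x.drop k).drop j) ?_
    (fun j => drop_mem_cbDeriv hg (drop_mem_cbDeriv hg hx k) j) hfin
  intro i j hij
  have := congrArg (fun z : BackOrbit g => z.1 0) hij
  simp only [drop_apply, zero_add] at this
  exact hinj this

/-- Derivatives of `W` are forward invariant because `g` has discrete fibres, and are covered by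
their images because `g` is onto and `W` is compact; so a finite one is permuted. -/
theorem bijOn_second [CompactSpace W] [T2Space W] (hg : Continuous g)
    (hs : Function.Surjective g)
    (hH : IsClosed {p : W × W | p.1 ≠ p.2 ∧ g p.1 = g p.2})
    (hfin : (derivedSet (derivedSet (univ : Set W))).Finite) :
    BijOn g (derivedSet (derivedSet univ)) (derivedSet (derivedSet univ)) := by
  have hm : MapsTo g (derivedSet (derivedSet univ)) (derivedSet (derivedSet univ)) :=
    mapsTo_derivedSet hg (BackOrbit.eventually_fiber hH)
      (mapsTo_derivedSet hg (BackOrbit.eventually_fiber hH) (mapsTo_univ g univ))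
  refine (hfin.surjOn_iff_bijOn_of_mapsTo hm).1 ?_
  refine fun w hw => exists_lift_derivedSet hg (fun v hv => ?_) hw
  refine exists_lift_derivedSet hg (fun u _ => ?_) hv
  obtain ⟨x, hx⟩ := hs u
  exact ⟨x, mem_univ _, hx⟩

end Abstract

theorem stmt2 (β : Ordinal) (hβ1 : 1 ≤ β) (hβc : β.card ≤ Cardinal.aleph0)
    (n m : ℕ) (hn : 0 < n) (hm : 0 < m)
    (f : unitI → unitI) (c : unitI) (hf : Unimodal f c) (hleo : LEO f)
    (homega : HomeoOrd (omegaLimitSet f c) (Ordinal.omega0 ^ (2 : Ordinal) * n))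
    (hinhom : HomeoOrd (Inhom f c) (Ordinal.omega0 ^ (β + 1) * m)) :
    (β = 1 →
      (n = 1 → m ≠ 2) ∧ (n = 2 → 2 ≤ m ∧ m ≠ 4) ∧ (2 < n → n ≤ m)) ∧
    (1 < β →
      (n = 1 → m ≠ 2) ∧ (n = 2 → 2 ≤ m ∧ m ≠ 4) ∧ (n = 4 → m ≠ 2)) := by
  obtain ⟨e⟩ := homega
  obtain ⟨e'⟩ := hinhom
  have hcont := hf.1
  set g := omegaMap (c := c) hcont with hgdef
  have hg : Continuous g := continuous_omegaMap hcont
  have hs : Function.Surjective g := surjective_omegaMap hcont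
  have : CompactSpace (omegaLimitSet f c) :=
    isCompact_iff_compactSpace.1 isClosed_omegaLimitSet.isCompact
  have hncard : (derivedSet (derivedSet (univ : Set (omegaLimitSet f c)))).ncard = n := by
    rw [← cbDeriv_two, homeo_ncard_cbDeriv e, ncard_cbDeriv_ordSpace 2 (by simp)]
  have hDfin : (derivedSet (derivedSet (univ : Set (omegaLimitSet f c)))).Finite :=
    finite_of_ncard_pos (hncard ▸ hn)
  have hinf : (omegaLimitSet f c).Infinite := by
    intro hfin
    have : Finite (omegaLimitSet f c) := hfin
    obtain ⟨w, hw⟩ := nonempty_of_ncard_ne_zero (hncard ▸ hn.ne')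
    rw [mem_derivedSet] at hw
    have hempty : 𝓝[≠] w = ⊥ := by
      rw [← discreteTopology_iff_nhds_ne.1 inferInstance w]
    simp only [AccPt, hempty, bot_inf_eq] at hw
    exact hw.ne rfl
  have hiso : ∃ q : omegaLimitSet f c, q ∉ derivedSet univ := by
    obtain ⟨ξ, hξ⟩ := exists_isolated_ordSpace (Ordinal.omega0 ^ (2 : Ordinal) * n)
    refine ⟨e.symm ξ, fun h => hξ ?_⟩
    have := mapsTo_derivedSet e.continuous
      (fun x => Eventually.of_forall fun y hy => e.injective hy) (mapsTo_univ e univ) h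
    simpa using this
  have hc := critical_notMem hcont hinf hiso
  have hH := isClosed_omegaMap_pairs hf hc
  have hper : ∀ w ∈ Function.periodicPts g,
      w ∈ derivedSet (univ : Set (omegaLimitSet f c)) := by
    rintro w ⟨p, hp, hw⟩
    refine not_isolated_of_periodic hcont hinf hp ?_
    rw [← iterate_omegaMap_val hcont]
    exact congrArg Subtype.val hw
  have hMcard : (cbDeriv (BackOrbit g) (β + 1)).ncard = m := by
    rw [← homeo_ncard_cbDeriv (inhomHomeo hcont), homeo_ncard_cbDeriv e',
      ncard_cbDeriv_ordSpace (β + 1) (by simp)]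
  have hMfin : (cbDeriv (BackOrbit g) (β + 1)).Finite := finite_of_ncard_pos (hMcard ▸ hm)
  have hMper : ∀ x ∈ cbDeriv (BackOrbit g) (β + 1), ∀ k, x.1 k ∈ Function.periodicPts g :=
    fun x hx k => BackOrbit.periodic_of_finite hg hMfin hx k
  set M := cbDeriv (BackOrbit g) (β + 1) with hM
  set D := derivedSet (derivedSet (univ : Set (omegaLimitSet f c))) with hD
  have hAcard : ((fun x : BackOrbit g => (x.1 0).1) '' M).ncard = m := by
    rw [InjOn.ncard_image, hMcard]
    exact fun x hx y hy h => BackOrbit.eq_of_periodic (hMper x hx) (hMper y hy) (Subtype.ext h)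
  have hBcard : (Subtype.val '' D).ncard = n := by
    rw [ncard_image_of_injective _ Subtype.val_injective, hncard]
  have hAm : MapsTo f ((fun x : BackOrbit g => (x.1 0).1) '' M)
      ((fun x : BackOrbit g => (x.1 0).1) '' M) := by
    rintro _ ⟨x, hx, rfl⟩
    exact ⟨(BackOrbit.shift hg).symm x, (homeo_mem_cbDeriv (BackOrbit.shift hg).symm _ x).2 hx, rfl⟩
  have hAi : InjOn f ((fun x : BackOrbit g => (x.1 0).1) '' M) := by
    rintro _ ⟨x, hx, rfl⟩ _ ⟨y, hy, rfl⟩ h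
    exact congrArg Subtype.val ((Function.bijOn_periodicPts g).injOn (hMper x hx 0) (hMper y hy 0)
      (Subtype.ext h))
  have hbij : BijOn g D D := bijOn_second hg hs hH hDfin
  have hBm : MapsTo f (Subtype.val '' D) (Subtype.val '' D) := by
    rintro _ ⟨w, hw, rfl⟩
    exact ⟨g w, hbij.mapsTo hw, rfl⟩
  have hBi : InjOn f (Subtype.val '' D) := by
    rintro _ ⟨w, hw, rfl⟩ _ ⟨v, hv, rfl⟩ h
    exact congrArg Subtype.val (hbij.injOn hw hv (Subtype.ext h))
  have hAB : (((fun x : BackOrbit g => (x.1 0).1) '' M) ∩ (Subtype.val '' D)).Nonempty := by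
    obtain ⟨y, hy, hyD⟩ := BackOrbit.exists_over_second hg hH hper hβ1
      (nonempty_of_ncard_ne_zero (hMcard ▸ hm.ne'))
    exact ⟨_, ⟨y, hy, rfl⟩, ⟨_, hyD, rfl⟩⟩
  have key := card_constraints hf hleo hinf (hMfin.image _) hAm hAi (hDfin.image _) hBm hBi hAB
  rw [hAcard, hBcard] at key
  refine ⟨fun hβ => ⟨key.1, key.2.1, fun _ => ?_⟩, fun _ => key⟩
  -- For `β = 1` both derivatives have rank two, and the points of `D` lift to points of `M`.
  have hM2 : M = cbDeriv (BackOrbit g) 2 := by rw [hM, hβ, one_add_one_eq_two]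
  have hsub := BackOrbit.second_subset_image hg hs
  rw [← hM2] at hsub
  calc n = D.ncard := hncard.symm
    _ ≤ ((fun x : BackOrbit g => x.1 0) '' M).ncard := ncard_le_ncard hsub (hMfin.image _)
    _ ≤ M.ncard := ncard_image_le hMfin
    _ = m := hMcard

end
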